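/- arXiv:1907.00061 — 2 statements merged into one kernel-verified Lean document; each statement's English description precedes it below -/
import Mathlib

section
/- For all integers r ≥ 2 and k ≥ 3, there exists a finite digraph J with two distinguished distinct vertices u and w such that: (1) J has directed girth at least k (every directed cycle of J has length at least k); (2) J admits an acyclic r-coloring; and (3) every acyclic r-coloring of J assigns different colors to u and w. -/
/-- A directed cycle of length `ℓ ≥ 2` in the digraph with arc relation `Adj`. -/
def IsDicycle {V : Type} (Adj : V → V → Prop) (ℓ : ℕ) (c : ZMod ℓ → V) : Prop :=
  2 ≤ ℓ ∧ Function.Injective c ∧ ∀ j : ZMod ℓ, Adj (c j) (c (j + 1))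

/-- `f` is an acyclic coloring of the digraph with arc relation `Adj`: no
directed cycle is monochromatic. -/
def IsAcyclicDigraphColoring {V : Type} {r : ℕ} (Adj : V → V → Prop) (f : V → Fin r) : Prop :=
  ∀ (ℓ : ℕ) (c : ZMod ℓ → V), IsDicycle Adj ℓ c → ∃ i j : ZMod ℓ, f (c i) ≠ f (c j)

open Relation

inductive Wk {V : Type} (R : V → V → Prop) : ℕ → V → V → Prop
  | nil (a : V) : Wk R 0 a a
  | cons {n : ℕ} {a b c : V} : R a b → Wk R n b c → Wk R (n + 1) a c

def Mono {V : Type} {r : ℕ} (R : V → V → Prop) (f : V → Fin r) (a b : V) : Prop :=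
  R a b ∧ f a = f b

def Col {V : Type} {r : ℕ} (R : V → V → Prop) (f : V → Fin r) : Prop :=
  ∀ a, ¬ TransGen (Mono R f) a a

def Gir {V : Type} (k : ℕ) (R : V → V → Prop) : Prop :=
  ∀ n a, 0 < n → Wk R n a a → k ≤ n

theorem Wk.fn {V : Type} {R : V → V → Prop} (w : ℕ → V) (n : ℕ) :
    ∀ s, (∀ i, s ≤ i → i < s + n → R (w i) (w (i + 1))) → Wk R n (w s) (w (s + n)) := by
  induction n with
  | zero => intro s _; exact Wk.nil _
  | succ n ih =>
    intro s h
    have h2 := ih (s + 1) (fun i h1 h2 => h i (by omega) (by omega))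
    have h3 := Wk.cons (h s le_rfl (by omega)) h2
    rwa [show s + 1 + n = s + (n + 1) by ring] at h3

theorem Wk.exFn {V : Type} {R : V → V → Prop} {n : ℕ} {a b : V} (h : Wk R n a b) :
    ∃ w : ℕ → V, w 0 = a ∧ w n = b ∧ ∀ i < n, R (w i) (w (i + 1)) := by
  induction h with
  | nil a => exact ⟨fun _ => a, rfl, rfl, by simp⟩
  | @cons n a b c hab _ ih =>
    obtain ⟨w, h0, hn, hs⟩ := ih
    refine ⟨fun i => Nat.casesOn i a w, rfl, hn, ?_⟩
    intro i hi
    cases i with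
    | zero => simpa [h0] using hab
    | succ i => exact hs i (by omega)

theorem Wk.transGen {V : Type} {R : V → V → Prop} {n : ℕ} {a b : V} (h : Wk R n a b) :
    0 < n → TransGen R a b := by
  induction h with
  | nil a => intro h; omega
  | @cons n a b c hab hw ih =>
    intro _
    rcases Nat.eq_zero_or_pos n with rfl | hn
    · cases hw; exact TransGen.single hab
    · exact TransGen.head hab (ih hn)

theorem exWk {V : Type} {R : V → V → Prop} {a b : V} (h : TransGen R a b) :
    ∃ n, 0 < n ∧ Wk R n a b := by
  induction h using TransGen.head_induction_on with
  | single h => exact ⟨1, one_pos, Wk.cons h (Wk.nil _)⟩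
  | head h _ ih =>
    obtain ⟨n, _, h2⟩ := ih
    exact ⟨n + 1, by omega, Wk.cons h h2⟩

theorem Wk.of_dicycle {V : Type} {R : V → V → Prop} {l : ℕ} {c : ZMod l → V}
    (h : IsDicycle R l c) : Wk R l (c 0) (c 0) := by
  have := Wk.fn (R := R) (fun i : ℕ => c (i : ZMod l)) l 0
    (fun i _ _ => by simpa using h.2.2 (i : ZMod l))
  simpa using this

theorem ex_dicycle {V : Type} {R : V → V → Prop} (hirr : ∀ v, ¬ R v v) {a : V}
    (h : TransGen R a a) : ∃ (l : ℕ) (c : ZMod l → V), IsDicycle R l c := by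
  classical
  have hex : ∃ n, 0 < n ∧ ∃ a, Wk R n a a := by
    obtain ⟨n, hn, hw⟩ := exWk h
    exact ⟨n, hn, a, hw⟩
  obtain ⟨hn, a, hw⟩ := Nat.find_spec hex
  have hmin : ∀ m, 0 < m → (∃ a, Wk R m a a) → Nat.find hex ≤ m :=
    fun m h1 h2 => Nat.find_min' hex ⟨h1, h2⟩
  generalize Nat.find hex = n at *
  obtain ⟨w, h0, hwn, hs⟩ := hw.exFn
  have hn2 : 2 ≤ n := by
    by_contra hlt
    obtain rfl : n = 1 := by omega
    have := hs 0 (by omega)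
    simp only [zero_add] at this
    rw [h0, hwn] at this
    exact hirr _ this
  have : NeZero n := ⟨by omega⟩
  have key : ∀ i j, i < j → j < n → w i ≠ w j := by
    intro i j hij hj he
    have h1 := Wk.fn (R := R) w (j - i) i (fun t _ _ => hs t (by omega))
    rw [show i + (j - i) = j by omega, ← he] at h1
    have := hmin (j - i) (by omega) ⟨_, h1⟩
    omega
  refine ⟨n, fun j => w j.val, hn2, ?_, ?_⟩
  · intro i j hij
    apply ZMod.val_injective n
    rcases lt_trichotomy i.val j.val with h | h | h
    · exact absurd hij (key _ _ h (ZMod.val_lt j))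
    · exact h
    · exact absurd hij.symm (key _ _ h (ZMod.val_lt i))
  · intro j
    have : Fact (1 < n) := ⟨by omega⟩
    have hj := ZMod.val_lt j
    have hstep := hs j.val hj
    have hv : (j + 1).val = (j.val + 1) % n := by rw [ZMod.val_add, ZMod.val_one]
    show R (w j.val) (w (j + 1).val)
    rw [hv]
    rcases Nat.lt_or_ge (j.val + 1) n with h | h
    · rwa [Nat.mod_eq_of_lt h]
    · have he : j.val + 1 = n := by omega
      rw [he, Nat.mod_self, h0]
      rwa [he, hwn] at hstep

theorem Col.acyclic {V : Type} {r : ℕ} {R : V → V → Prop} {f : V → Fin r} (h : Col R f) :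
    IsAcyclicDigraphColoring R f := by
  intro l c hc
  by_contra hcon
  push Not at hcon
  have : IsDicycle (Mono R f) l c := ⟨hc.1, hc.2.1, fun j => ⟨hc.2.2 j, hcon _ _⟩⟩
  exact h _ ((Wk.of_dicycle this).transGen (by have := hc.1; omega))

theorem acyclic_col {V : Type} {r : ℕ} {R : V → V → Prop} (hirr : ∀ v, ¬ R v v)
    {f : V → Fin r} (h : IsAcyclicDigraphColoring R f) : Col R f := by
  intro a ha
  obtain ⟨l, c, hl, hi, hc⟩ := ex_dicycle (R := Mono R f) (fun v hv => hirr v hv.1) ha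
  have : NeZero l := ⟨by omega⟩
  have hz : ∀ m : ℕ, f (c (m : ZMod l)) = f (c 0) := by
    intro m
    induction m with
    | zero => simp
    | succ m ih => rw [← ih, (hc m).2]; simp
  obtain ⟨i, j, hij⟩ := h l c ⟨hl, hi, fun j => (hc j).1⟩
  apply hij
  have h1 := hz i.val
  have h2 := hz j.val
  rw [ZMod.natCast_zmod_val] at h1 h2
  rw [h1, h2]

def LexG {V : Type} (k : ℕ) (R : V → V → Prop) (p q : ZMod k × V) : Prop :=
  (p.1 = q.1 ∧ R p.2 q.2) ∨ q.1 = p.1 + 1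

theorem lex_gir {V : Type} {k : ℕ} {R : V → V → Prop} (h : Gir k R) : Gir k (LexG k R) := by
  have key : ∀ n p q, Wk (LexG k R) n p q →
      (p.1 = q.1 ∧ Wk R n p.2 q.2) ∨ ∃ m : ℕ, 0 < m ∧ m ≤ n ∧ q.1 = p.1 + m := by
    intro n p q hw
    induction hw with
    | nil a => exact Or.inl ⟨rfl, Wk.nil _⟩
    | cons hab _ ih =>
      rcases hab with ⟨h1, h2⟩ | h1 <;> rcases ih with ⟨h3, h4⟩ | ⟨m, h3, h4, h5⟩
      · exact Or.inl ⟨h1.trans h3, Wk.cons h2 h4⟩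
      · exact Or.inr ⟨m, h3, by omega, by rw [h5, h1]⟩
      · exact Or.inr ⟨1, by omega, by omega, by rw [← h3, h1]; simp⟩
      · exact Or.inr ⟨m + 1, by omega, by omega, by rw [h5, h1]; push_cast; ring⟩
  intro n p hn hw
  rcases key n p p hw with ⟨_, h2⟩ | ⟨m, h3, h4, h5⟩
  · exact h n _ hn h2
  · have : (m : ZMod k) = 0 := by simpa using h5
    rw [ZMod.natCast_eq_zero_iff] at this
    exact (Nat.le_of_dvd h3 this).trans h4

theorem lex_col {V : Type} {k r : ℕ} (hk : 0 < k) {R : V → V → Prop}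
    (h : ∀ f : V → Fin r, ¬ Col R f) (f : ZMod k × V → Fin (r + 1)) : ¬ Col (LexG k R) f := by
  intro hf
  by_cases hall : ∀ i, ∃ a, f (i, a) = Fin.last r
  · choose a ha using hall
    have hst : ∀ i, Mono (LexG k R) f (i, a i) (i + 1, a (i + 1)) :=
      fun i => ⟨Or.inr rfl, by rw [ha, ha]⟩
    have := Wk.fn (R := Mono (LexG k R) f) (fun i : ℕ => ((i : ZMod k), a (i : ZMod k))) k 0
      (fun i _ _ => by simpa using hst (i : ZMod k))
    simp only [zero_add, CharP.cast_eq_zero, Nat.cast_zero] at this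
    exact hf _ (this.transGen hk)
  · push Not at hall
    obtain ⟨i, hi⟩ := hall
    apply h (fun v => (f (i, v)).castPred (hi v))
    intro a ha
    refine hf (i, a) (TransGen.lift (p := Mono (LexG k R) f) (fun v => (i, v)) ?_ a a ha)
    rintro x y ⟨h1, h2⟩
    exact ⟨Or.inl ⟨rfl, h1⟩, Fin.castPred_inj.mp h2⟩

theorem ex_big (k : ℕ) (hk : 0 < k) (r : ℕ) :
    ∃ (V : Type) (_ : Finite V) (R : V → V → Prop), Gir k R ∧ ∀ f : V → Fin r, ¬ Col R f := by
  induction r with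
  | zero =>
    refine ⟨Unit, inferInstance, fun _ _ => False, ?_, fun f => (f ()).elim0⟩
    intro n a hn hw
    cases hw with
    | nil => omega
    | cons h _ => exact h.elim
  | succ r ih =>
    obtain ⟨V, _, R, h1, h2⟩ := ih
    have : NeZero k := ⟨by omega⟩
    exact ⟨ZMod k × V, inferInstance, LexG k R, lex_gir h1, lex_col hk h2⟩

def Del {V : Type} (R : V → V → Prop) (x y a b : V) : Prop := R a b ∧ ¬ (a = x ∧ b = y)

theorem Wk.mono {V : Type} {R S : V → V → Prop} (h : ∀ a b, R a b → S a b) {n : ℕ} {a b : V}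
    (hw : Wk R n a b) : Wk S n a b := by
  induction hw with
  | nil a => exact Wk.nil _
  | cons h1 _ ih => exact Wk.cons (h _ _ h1) ih

theorem ex_crit (k : ℕ) (hk : 0 < k) (r : ℕ) (hr : 0 < r) :
    ∃ (V : Type) (_ : Finite V) (R : V → V → Prop) (x y : V), Gir k R ∧ R x y ∧
      (∀ f : V → Fin r, ¬ Col R f) ∧ ∃ f : V → Fin r, Col (Del R x y) f := by
  obtain ⟨V, hV, R₀, h1, h2⟩ := ex_big k hk r
  obtain ⟨R, hR⟩ := (Set.toFinite {R : V → V → Prop | Gir k R ∧ ∀ f : V → Fin r, ¬ Col R f}).exists_minimal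
    ⟨R₀, h1, h2⟩
  obtain ⟨⟨hg, hc⟩, hmin⟩ := hR
  have hex : ∃ x y, R x y := by
    by_contra hno
    push Not at hno
    apply hc (fun _ => ⟨0, hr⟩)
    intro a ha
    obtain ⟨b, hb, _⟩ := TransGen.head'_iff.mp ha
    exact hno _ _ hb.1
  obtain ⟨x, y, hxy⟩ := hex
  refine ⟨V, hV, R, x, y, hg, hxy, hc, ?_⟩
  by_contra hno
  push Not at hno
  have hle : Del R x y ≤ R := fun a b h => h.1
  have := hmin (y := Del R x y)
    ⟨fun n a hn hw => hg n a hn (hw.mono (fun _ _ h => h.1)), hno⟩ hle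
  exact (this x y hxy).2 ⟨rfl, rfl⟩

def SubG {V : Type} (R : V → V → Prop) (x y : V) : Option V → Option V → Prop
  | some a, some b => Del R x y a b
  | some a, none => a = x
  | none, some b => b = y
  | none, none => False

theorem sub_gir {V : Type} {k : ℕ} {R : V → V → Prop} {x y : V} (hxy : R x y) (h : Gir k R) :
    Gir k (SubG R x y) := by
  have key : ∀ n p q, Wk (SubG R x y) n p q → ∃ m ≤ n, Wk R m (p.getD y) (q.getD y) ∧
      (p ≠ none → 0 < n → 0 < m) := by
    intro n p q hw
    induction hw with
    | nil a => exact ⟨0, le_rfl, Wk.nil _, by simp⟩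
    | @cons n a b c hab _ ih =>
      obtain ⟨m, h1, h2, h3⟩ := ih
      cases a with
      | none =>
        cases b with
        | none => exact hab.elim
        | some b =>
          obtain rfl : b = y := hab
          exact ⟨m, by omega, h2, by simp⟩
      | some a =>
        refine ⟨m + 1, by omega, Wk.cons ?_ h2, by simp⟩
        cases b with
        | none =>
          obtain rfl : a = x := hab
          exact hxy
        | some b => exact hab.1
  intro n p hn hw
  cases p with
  | some a =>
    obtain ⟨m, h1, h2, h3⟩ := key _ _ _ hw
    exact (h m _ (h3 (by simp) hn) h2).trans h1
  | none =>
    cases hw with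
    | nil => omega
    | @cons n _ b _ hab hw =>
      cases b with
      | none => exact hab.elim
      | some b =>
        obtain rfl : b = y := hab
        have hn : 0 < n := by
          rcases Nat.eq_zero_or_pos n with rfl | h
          · cases hw
          · exact h
        obtain ⟨m, h1, h2, h3⟩ := key _ _ _ hw
        exact (h m _ (h3 (by simp) hn) h2).trans (by omega)

theorem sub_col {V : Type} {r : ℕ} (hr : 2 ≤ r) {R : V → V → Prop} {x y : V}
    {f : V → Fin r} (h : Col (Del R x y) f) : ∃ g : Option V → Fin r, Col (SubG R x y) g := by
  have : Nontrivial (Fin r) := Fin.nontrivial_iff_two_le.mpr hr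
  obtain ⟨c, hc⟩ := exists_ne (f x)
  let g : Option V → Fin r := fun p => p.elim c f
  have key : ∀ p q, TransGen (Mono (SubG R x y) g) p q →
      ∃ b, q = some b ∧ ∀ a, p = some a → TransGen (Mono (Del R x y) f) a b := by
    intro p q hw
    have hno : ∀ p, ¬ Mono (SubG R x y) g p none := by
      rintro (_ | a) ⟨h1, h2⟩
      · exact h1
      · obtain rfl : a = x := h1
        exact hc h2.symm
    induction hw with
    | @single q h =>
      cases q with
      | none => exact (hno _ h).elim
      | some b =>
        refine ⟨b, rfl, ?_⟩
        rintro a rfl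
        exact TransGen.single h
    | @tail b' q _ h ih =>
      obtain ⟨b, rfl, ih⟩ := ih
      cases q with
      | none => exact (hno _ h).elim
      | some d =>
        refine ⟨d, rfl, ?_⟩
        intro a ha
        exact (ih a ha).tail h
  refine ⟨g, ?_⟩
  intro p hp
  obtain ⟨b, rfl, hb⟩ := key _ _ hp
  exact h b (hb b rfl)

theorem sub_ne {V : Type} {r : ℕ} {R : V → V → Prop} {x y : V}
    (h : ∀ f : V → Fin r, ¬ Col R f) {g : Option V → Fin r} (hg : Col (SubG R x y) g) :
    g (some x) ≠ g none := by
  intro he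
  apply h (fun v => g (some v))
  intro a ha
  refine hg (some a) (TransGen.lift' (p := Mono (SubG R x y) g) some ?_ a a ha)
  rintro b c ⟨h1, h2⟩
  by_cases hbc : b = x ∧ c = y
  · obtain ⟨rfl, rfl⟩ := hbc
    exact TransGen.tail (TransGen.single (b := none) ⟨rfl, he⟩) ⟨rfl, he.symm.trans h2⟩
  · exact TransGen.single ⟨⟨h1, hbc⟩, h2⟩

/-- For all `r ≥ 2`, `k ≥ 3` there is a finite digraph `J` with directed girth
at least `k`, admitting an acyclic `r`-coloring, with two distinct vertices
`u`, `w` that get different colors in every acyclic `r`-coloring. -/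
theorem exists_diff_color_digraph_gadget (r k : ℕ) (hr : 2 ≤ r) (hk : 3 ≤ k) :
    ∃ (V : Type) (_ : Fintype V) (Adj : V → V → Prop) (u w : V),
      u ≠ w ∧
      (∀ v : V, ¬ Adj v v) ∧
      (∀ (ℓ : ℕ) (c : ZMod ℓ → V), IsDicycle Adj ℓ c → k ≤ ℓ) ∧
      (∃ f : V → Fin r, IsAcyclicDigraphColoring Adj f) ∧
      (∀ f : V → Fin r, IsAcyclicDigraphColoring Adj f → f u ≠ f w) := by
  obtain ⟨V, hV, R, x, y, hg, hxy, hc, f, hf⟩ := ex_crit k (by omega) r (by omega)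
  have hG := sub_gir hxy hg
  have hirr : ∀ v, ¬ SubG R x y v v := by
    intro v hv
    have := hG 1 v one_pos (Wk.cons hv (Wk.nil _))
    omega
  obtain ⟨g, hgc⟩ := sub_col hr hf
  exact ⟨Option V, Fintype.ofFinite _, SubG R x y, some x, none, by simp, hirr,
    fun l c h => hG l _ (by have := h.1; omega) (Wk.of_dicycle h), ⟨g, hgc.acyclic⟩,
    fun f h => sub_ne hc (acyclic_col hirr h)⟩
end

section
/- For every integer k ≥ 3, there exists a finite digraph H with three distinguished pairwise distinct vertices a, b, c such that: (1) every vertex of H has in-degree at most k+1 and out-degree at most k+1; (2) the directed girth of H is exactly k, i.e., H contains a directed cycle of length k and no shorter directed cycle; (3) H admits an acyclic 2-coloring; and (4) every acyclic 2-coloring of H assigns the same color to a, b, and c. -/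
/-- Arc relation of the equalizer digraph. -/
def EqAdj (k : ℕ) (u v : ZMod k × ZMod k) : Prop :=
  v.1 = u.1 + 1 ∨ (v.1 = u.1 ∧ u.1 ≠ 0 ∧ u.1 ≠ 1 ∧ v.2 = u.2 + 1)

theorem eq_surj {k : ℕ} [NeZero k] {α : Type} [Nonempty α] (h : α → ZMod k)
    (H : ∀ j, ∃ j', h j' = h j + 1) : Function.Surjective h := by
  obtain ⟨j0⟩ := ‹Nonempty α›
  have key : ∀ n : ℕ, ∃ j, h j = h j0 + n := by
    intro n
    induction n with
    | zero => exact ⟨j0, by simp⟩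
    | succ n ih =>
      obtain ⟨j, hj⟩ := ih
      obtain ⟨j', hj'⟩ := H j
      exact ⟨j', by rw [hj', hj]; push_cast; ring⟩
  intro y
  obtain ⟨j, hj⟩ := key (y - h j0).val
  exact ⟨j, by rw [hj, ZMod.natCast_zmod_val]; ring⟩

theorem eq_dich {k ℓ : ℕ} [NeZero k] [NeZero ℓ] (hk : (1 : ZMod k) ≠ 0) (w : ZMod ℓ → ZMod k × ZMod k)
    (hw : ∀ j, EqAdj k (w j) (w (j + 1))) :
    Function.Surjective (fun j => (w j).1) ∨
      ∃ i, i ≠ 0 ∧ i ≠ 1 ∧ (∀ j, (w j).1 = i) ∧ Function.Surjective (fun j => (w j).2) := by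
  by_cases H : ∀ j, ∃ j', (w j').1 = (w j).1 + 1
  · exact Or.inl (eq_surj _ H)
  · right
    push Not at H
    obtain ⟨j0, hj0⟩ := H
    have key : ∀ n : ℕ, (w (j0 + n)).1 = (w j0).1 := by
      intro n
      induction n with
      | zero => simp
      | succ n ih =>
        have e : j0 + ((n + 1 : ℕ) : ZMod ℓ) = j0 + n + 1 := by push_cast; ring
        rw [e]
        rcases hw (j0 + n) with h | h
        · exact absurd (h.trans (by rw [ih])) (hj0 _)
        · exact h.1.trans ih
    have hall : ∀ j, (w j).1 = (w j0).1 := by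
      intro j
      have := key (j - j0).val
      rwa [ZMod.natCast_zmod_val, add_sub_cancel] at this
    have hst : ∀ j, (w j).1 ≠ 0 ∧ (w j).1 ≠ 1 ∧ (w (j + 1)).2 = (w j).2 + 1 := by
      intro j
      rcases hw j with h | h
      · exact absurd (h.trans (by rw [hall])) (hj0 _)
      · exact h.2
    exact ⟨(w j0).1, (hst j0).1, (hst j0).2.1, hall, eq_surj _ fun j => ⟨j + 1, (hst j).2.2⟩⟩

theorem eq_card {k : ℕ} [NeZero k] (P : ZMod k × ZMod k → Prop) (i : ZMod k) (p : ZMod k × ZMod k)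
    (h : ∀ u, P u → u.1 = i ∨ u = p) : Nat.card {u // P u} ≤ k + 1 := by
  classical
  have hinj : Function.Injective (fun u : {u // P u} =>
      if u.1 = p then (none : Option (ZMod k)) else some u.1.2) := by
    rintro ⟨u, hu⟩ ⟨v, hv⟩ huv
    have h1 := h u hu
    have h2 := h v hv
    apply Subtype.ext
    by_cases a : u = p <;> by_cases b : v = p <;> simp_all
    exact Prod.ext (h1.trans h2.symm) huv
  have := Nat.card_le_card_of_injective _ hinj
  rwa [Nat.card_eq_fintype_card (α := Option _), Fintype.card_option, ZMod.card] at this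

theorem exists_equalizer_digraph (k : ℕ) (hk : 3 ≤ k) :
    ∃ (V : Type) (_ : Fintype V) (Adj : V → V → Prop) (a b c : V),
      a ≠ b ∧ a ≠ c ∧ b ≠ c ∧
      (∀ v : V, ¬ Adj v v) ∧
      (∀ v : V, Nat.card {u : V // Adj u v} ≤ k + 1) ∧
      (∀ v : V, Nat.card {u : V // Adj v u} ≤ k + 1) ∧
      (∃ w : ZMod k → V, IsDicycle Adj k w) ∧
      (∀ (ℓ : ℕ) (w : ZMod ℓ → V), IsDicycle Adj ℓ w → k ≤ ℓ) ∧
      (∃ f : V → Fin 2, IsAcyclicDigraphColoring Adj f) ∧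
      (∀ f : V → Fin 2, IsAcyclicDigraphColoring Adj f → f a = f b ∧ f b = f c) := by
  haveI : NeZero k := ⟨by omega⟩
  have h10 : (1 : ZMod k) ≠ 0 := by
    have : Fact (1 < k) := ⟨by omega⟩
    exact one_ne_zero
  have h20 : (2 : ZMod k) ≠ 0 := by
    intro h
    have h' : ((2 : ℕ) : ZMod k) = 0 := by exact_mod_cast h
    rw [ZMod.natCast_eq_zero_iff] at h'
    exact absurd (Nat.le_of_dvd (by norm_num) h') (by omega)
  have h12 : (1 : ZMod k) ≠ 2 := by
    intro h
    apply h10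
    linear_combination -h
  refine ⟨ZMod k × ZMod k, inferInstance, EqAdj k, (0, 0), (0, 1), (0, 2),
    by simpa using h10.symm, by simpa using h20.symm, by simpa using h12, ?_, ?_, ?_, ?_, ?_, ?_, ?_⟩
  · rintro v (h | h)
    · exact h10 (by linear_combination -h)
    · exact h10 (by linear_combination -h.2.2.2)
  · intro v
    refine eq_card _ (v.1 - 1) (v.1, v.2 - 1) ?_
    rintro u (h | h)
    · left; rw [h]; ring
    · right; ext
      · exact h.1.symm
      · simp [h.2.2.2]
  · intro v
    refine eq_card _ (v.1 + 1) (v.1, v.2 + 1) ?_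
    rintro u (h | h)
    · exact Or.inl h
    · exact Or.inr (Prod.ext h.1 h.2.2.2)
  · exact ⟨fun j => (j, 0), by omega, fun a b h => (Prod.ext_iff.1 h).1, fun j => Or.inl rfl⟩
  · rintro ℓ w ⟨hl, -, hw⟩
    haveI : NeZero ℓ := ⟨by omega⟩
    have : ∃ g : ZMod ℓ → ZMod k, Function.Surjective g := by
      rcases eq_dich h10 w hw with h | ⟨i, -, -, -, h⟩
      exacts [⟨_, h⟩, ⟨_, h⟩]
    obtain ⟨g, hg⟩ := this
    simpa [ZMod.card] using Fintype.card_le_of_surjective g hg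
  · refine ⟨fun v => if v.1 = 0 then 0 else if v.1 = 1 then 1 else if v.2 = 0 then 0 else 1, ?_⟩
    rintro ℓ w ⟨hl, -, hw⟩
    haveI : NeZero ℓ := ⟨by omega⟩
    rcases eq_dich h10 w hw with h | ⟨i, hi0, hi1, hi, h⟩
    · obtain ⟨p, hp⟩ := h 0
      obtain ⟨q, hq⟩ := h 1
      refine ⟨p, q, ?_⟩
      simp only at hp hq
      simp [hp, hq, h10]
    · obtain ⟨p, hp⟩ := h 0
      obtain ⟨q, hq⟩ := h 1
      refine ⟨p, q, ?_⟩
      simp only at hp hq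
      simp [hp, hq, h10, hi, hi0, hi1]
  · intro f hf
    have hA : ∀ i : ZMod k, i ≠ 0 → i ≠ 1 → ∀ x, ∃ y, f (i, y) = x := by
      intro i hi0 hi1 x
      obtain ⟨p, q, hpq⟩ := hf k (fun j => (i, j))
        ⟨by omega, fun a b h => (Prod.ext_iff.1 h).2, fun j => Or.inr ⟨rfl, hi0, hi1, rfl⟩⟩
      by_cases hp : f (i, p) = x
      · exact ⟨p, hp⟩
      · exact ⟨q, by omega⟩
    have hB : ∀ x, ∃ i, ∀ y, f (i, y) ≠ x := by
      intro x
      by_contra! H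
      choose y hy using H
      obtain ⟨p, q, hpq⟩ := hf k (fun j => (j, y j))
        ⟨by omega, fun a b h => (Prod.ext_iff.1 h).1, fun j => Or.inl rfl⟩
      exact hpq ((hy p).trans (hy q).symm)
    have hC : ∀ x, (∀ y, f (0, y) ≠ x) ∨ (∀ y, f (1, y) ≠ x) := by
      intro x
      obtain ⟨i, hi⟩ := hB x
      by_cases h0 : i = 0
      · subst h0; exact Or.inl hi
      by_cases h1 : i = 1
      · subst h1; exact Or.inr hi
      obtain ⟨y, hy⟩ := hA i h0 h1 x
      exact absurd hy (hi y)
    have hD : ∃ x, ∀ y, f (0, y) ≠ x := by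
      rcases hC 0 with h | h
      · exact ⟨0, h⟩
      rcases hC 1 with h' | h'
      · exact ⟨1, h'⟩
      have := h 0
      have := h' 0
      omega
    obtain ⟨x, hx⟩ := hD
    have h1 := hx 0
    have h2 := hx 1
    have h3 := hx 2
    constructor <;> omega
end
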